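/- Let 0<q<1 and σ>0, and take γ=0 (so condition (R) holds). Then the radii of convexity of g_{0,σ}(·;q) and h_{0,σ}(·;q) satisfy (1+q)/(9σ²) < (r^c(g_{0,σ}(·;q)))² < 9(1+q)(1+q²)(1+q+q²) / ( σ²(81q⁴+81q³+112q²+81q+81) ) and (1+q)/(4σ²) < r^c(h_{0,σ}(·;q)) < 2(1+q)(1+q²)(1+q+q²) / ( σ²(8q⁴+8q³+7q²+8q+8) ). -/

import Mathlib

noncomputable def qPochInf (a q : ℝ) : ℝ := ∏' k : ℕ, (1 - a * q ^ k)

noncomputable def qGamma (q x : ℝ) : ℝ :=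
  qPochInf q q * (1 - q) ^ (1 - x) / qPochInf (q ^ x) q

noncomputable def qML (γ σ q : ℝ) (z : ℂ) : ℂ :=
  ∑' n : ℕ,
    (((-1) ^ n * σ ^ (2 * n) * q ^ (n * (n - 1)) / qGamma q (2 * n + γ + 1) : ℝ) : ℂ) * z ^ (2 * n)

noncomputable def qMLR (γ σ q : ℝ) (x : ℝ) : ℝ :=
  ∑' n : ℕ,
    ((-1) ^ n * σ ^ (2 * n) * q ^ (n * (n - 1)) / qGamma q (2 * n + γ + 1)) * x ^ (2 * n)

def condR (q γ : ℝ) : Prop :=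
  (γ = 0 ∨ γ = 1) ∨
    (γ ∈ Set.Ioo (0 : ℝ) 2 ∧ γ ≠ 1 ∧
      1 < q⁻¹ * (1 - q) * (1 - q ^ (γ + 1)) * (1 - q ^ (γ + 2)))

noncomputable def radiusStarlike (α : ℝ) (f : ℂ → ℂ) : ℝ :=
  sSup {r : ℝ | 0 < r ∧ ∀ z : ℂ, 0 < ‖z‖ → ‖z‖ < r →
    α < (z * deriv f z / f z).re}

noncomputable def radiusConvex (α : ℝ) (f : ℂ → ℂ) : ℝ :=
  sSup {r : ℝ | 0 < r ∧ ∀ z : ℂ, ‖z‖ < r →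
    α < (1 + z * deriv (deriv f) z / deriv f z).re}

noncomputable def fML (γ σ q : ℝ) (z : ℂ) : ℂ :=
  Complex.exp ((1 / ((γ : ℂ) + 1)) *
    Complex.log (z ^ ((γ : ℂ) + 1) * (qGamma q (γ + 1) : ℂ) * qML γ σ q z))

noncomputable def gML (γ σ q : ℝ) (z : ℂ) : ℂ :=
  z * (qGamma q (γ + 1) : ℂ) * qML γ σ q z

noncomputable def hML (γ σ q : ℝ) (z : ℂ) : ℂ :=
  z * (qGamma q (γ + 1) : ℂ) *
    ∑' n : ℕ,
      (((-1) ^ n * σ ^ (2 * n) * q ^ (n * (n - 1)) / qGamma q (2 * n + γ + 1) : ℝ) : ℂ) * z ^ n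

noncomputable def hMLR (γ σ q : ℝ) (x : ℝ) : ℝ :=
  x * qGamma q (γ + 1) *
    ∑' n : ℕ,
      ((-1) ^ n * σ ^ (2 * n) * q ^ (n * (n - 1)) / qGamma q (2 * n + γ + 1)) * x ^ n

/-- Normalized function $g_{0,σ}(z;q) = z·λ_{0,σ}(z;q)$ (using $Γ_q(1)=1$). -/
noncomputable def gML0 (σ q : ℝ) (z : ℂ) : ℂ := z * qML 0 σ q z

/-- Normalized function $h_{0,σ}(z;q)$ (using $Γ_q(1)=1$). -/
noncomputable def hML0 (σ q : ℝ) (z : ℂ) : ℂ :=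
  z * ∑' n : ℕ,
    (((-1) ^ n * σ ^ (2 * n) * q ^ (n * (n - 1)) / qGamma q (2 * n + 1) : ℝ) : ℂ) * z ^ n

/-!
Both functions have the form `F z = z f(-κ z ^ p)`, with `p = 2` for `g_{0,σ}`, `p = 1` for
`h_{0,σ}`, and `f` an entire function with positive, rapidly decreasing coefficients. Then
`F' z = B s` and `(z F')' z = A s` with `s = -κ z ^ p`, so that `1 + z F'' / F' = A / B`; the scale
`κ` is chosen such that `A s = 1 + s + t s ^ 2 + ⋯`.

On the disc `‖s‖ ≤ 1` one has `‖A s - B s‖ < ‖B s‖`, hence `0 < Re (A / B)`: after multiplying both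
sides by a factor `1 - c s` that removes the quadratic terms, this follows from the triangle
inequality. At the negative point `s = -(1 + 2 t)` the series alternate, which gives
`A s ≤ 0 < B s`, so convexity fails there. Therefore the radius `r` satisfies
`1 / κ < r ^ p ≤ (1 + 2 t) / κ < 1 / (κ (1 - 2 t))`.
-/

section QGamma

variable {q : ℝ}

/-- The `q`-number `[k]_q = 1 + q + ⋯ + q ^ (k - 1)`, the ratio of consecutive values of `Γ_q` at
the positive integers. -/
def qNumber (q : ℝ) (k : ℕ) : ℝ := ∑ i ∈ Finset.range k, q ^ i

lemma qNumber_pos (hq0 : 0 < q) (k : ℕ) : 0 < qNumber q (k + 1) :=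
  Finset.sum_pos (fun _ _ => by positivity) (by simp)

lemma mul_pow_le_qNumber (hq0 : 0 < q) (hq1 : q < 1) (k : ℕ) :
    (k + 1) * q ^ k ≤ qNumber q (k + 1) := by
  have h : ∀ i ∈ Finset.range (k + 1), q ^ k ≤ q ^ i := fun i hi =>
    pow_le_pow_of_le_one hq0.le hq1.le (by have := Finset.mem_range.1 hi; omega)
  simpa [qNumber] using Finset.card_nsmul_le_sum _ _ _ h

lemma one_add_le_qNumber (hq0 : 0 < q) (k : ℕ) : 1 + q ≤ qNumber q (k + 2) :=
  calc 1 + q = ∑ i ∈ Finset.range 2, q ^ i := by simp [Finset.sum_range_succ]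
    _ ≤ qNumber q (k + 2) :=
      Finset.sum_le_sum_of_subset_of_nonneg (by simp) fun _ _ _ => by positivity

lemma summable_norm_neg_mul_pow (hq0 : 0 < q) (hq1 : q < 1) (a : ℝ) :
    Summable fun k : ℕ => ‖-(a * q ^ k)‖ := by
  simpa using (((summable_geometric_of_lt_one hq0.le hq1).mul_left a).neg).norm

lemma qPochInf_ne_zero (hq0 : 0 < q) (hq1 : q < 1) {a : ℝ} (ha0 : 0 ≤ a) (ha1 : a < 1) :
    qPochInf a q ≠ 0 := by
  have hfactor (k : ℕ) : 1 + -(a * q ^ k) ≠ 0 := by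
    have : a * q ^ k ≤ a := mul_le_of_le_one_right ha0 (pow_le_one₀ hq0.le hq1.le)
    linarith
  simpa [qPochInf, sub_eq_add_neg] using
    tprod_one_add_ne_zero_of_summable hfactor (summable_norm_neg_mul_pow hq0 hq1 a)

lemma qPochInf_eq_mul (hq0 : 0 < q) (hq1 : q < 1) (a : ℝ) :
    qPochInf a q = (1 - a) * qPochInf (a * q) q := by
  have hm : Multipliable fun k : ℕ => 1 - a * q ^ (k + 1) :=
    (multipliable_one_add_of_summable (summable_norm_neg_mul_pow hq0 hq1 (a * q))).congr
      fun k => by ring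
  calc qPochInf a q = (1 - a * q ^ 0) * ∏' k : ℕ, (1 - a * q ^ (k + 1)) :=
        tprod_eq_zero_mul' (f := fun k : ℕ => 1 - a * q ^ k) hm
    _ = (1 - a) * qPochInf (a * q) q := by
        rw [pow_zero, mul_one, qPochInf]
        exact congrArg _ (tprod_congr fun k => by ring)

lemma qGamma_one (hq0 : 0 < q) (hq1 : q < 1) : qGamma q 1 = 1 := by
  simp [qGamma, qPochInf_ne_zero hq0 hq1 hq0.le hq1]

lemma qGamma_add_one (hq0 : 0 < q) (hq1 : q < 1) {x : ℝ} (hx : 0 < x) :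
    qGamma q (x + 1) = (1 - q ^ x) / (1 - q) * qGamma q x := by
  have hpow : (1 - q) ^ (1 - (x + 1)) = (1 - q) ^ (1 - x) / (1 - q) := by
    rw [← Real.rpow_sub_one (sub_pos.2 hq1).ne', sub_right_comm, sub_sub]
    ring_nf
  have hqx : 1 - q ^ x ≠ 0 := (sub_pos.2 (Real.rpow_lt_one hq0.le hq1 hx)).ne'
  rw [qGamma, qGamma, Real.rpow_add_one hq0.ne', hpow, qPochInf_eq_mul hq0 hq1 (q ^ x)]
  field_simp

lemma qGamma_natCast_add_two (hq0 : 0 < q) (hq1 : q < 1) (n : ℕ) :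
    qGamma q (n + 1 + 1) = qNumber q (n + 1) * qGamma q (n + 1) := by
  rw [qGamma_add_one hq0 hq1 (by positivity), qNumber, geom_sum_eq hq1.ne, ← Nat.cast_succ,
    Real.rpow_natCast, ← neg_div_neg_eq, neg_sub, neg_sub]

lemma qGamma_natCast_add_one_pos (hq0 : 0 < q) (hq1 : q < 1) (n : ℕ) : 0 < qGamma q (n + 1) := by
  induction n with
  | zero => simp [qGamma_one hq0 hq1]
  | succ n ih =>
    rw [Nat.cast_succ, qGamma_natCast_add_two hq0 hq1]
    exact mul_pos (qNumber_pos hq0 n) ih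

/-- The modulus `(1 + q) ^ n q ^ (n (n - 1)) / Γ_q(2n + 1)` of the `n`-th coefficient of
`λ_{0,σ}`, rescaled so that the first two are equal to `1`. -/
noncomputable def qCoeff (q : ℝ) (n : ℕ) : ℝ :=
  (1 + q) ^ n * q ^ (n * (n - 1)) / qGamma q (2 * n + 1)

lemma qCoeff_pos (hq0 : 0 < q) (hq1 : q < 1) (n : ℕ) : 0 < qCoeff q n := by
  have := qGamma_natCast_add_one_pos hq0 hq1 (2 * n)
  push_cast at this
  rw [qCoeff]
  positivity

lemma qCoeff_succ (hq0 : 0 < q) (hq1 : q < 1) (n : ℕ) :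
    qCoeff q (n + 1) =
      qCoeff q n * (q ^ (2 * n) * (1 + q) / (qNumber q (2 * n + 1) * qNumber q (2 * n + 2))) := by
  have hΓ : qGamma q (2 * (n + 1 : ℕ) + 1) =
      qNumber q (2 * n + 2) * (qNumber q (2 * n + 1) * qGamma q (2 * n + 1)) := by
    have h₁ := qGamma_natCast_add_two hq0 hq1 (2 * n)
    have h₂ := qGamma_natCast_add_two hq0 hq1 (2 * n + 1)
    push_cast at h₁ h₂ ⊢
    rw [← h₁, ← h₂]
    ring_nf
  have hexp : (n + 1) * (n + 1 - 1) = n * (n - 1) + 2 * n := by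
    cases n with
    | zero => rfl
    | succ m => simp only [Nat.add_sub_cancel]; ring
  rw [qCoeff, qCoeff, hΓ, hexp, pow_add, pow_succ]
  simp only [div_eq_mul_inv, mul_inv]
  ring

lemma qCoeff_zero (hq0 : 0 < q) (hq1 : q < 1) : qCoeff q 0 = 1 := by
  simp [qCoeff, qGamma_one hq0 hq1]

lemma qCoeff_one (hq0 : 0 < q) (hq1 : q < 1) : qCoeff q 1 = 1 := by
  have : 1 + q ≠ 0 := by positivity
  simp [qCoeff_succ hq0 hq1 0, qCoeff_zero hq0 hq1, qNumber, Finset.sum_range_succ, this]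

lemma qCoeff_two (hq0 : 0 < q) (hq1 : q < 1) :
    qCoeff q 2 = q ^ 2 / ((1 + q ^ 2) * (1 + q + q ^ 2)) := by
  have hnum : qNumber q 4 = (1 + q) * (1 + q ^ 2) := by simp [qNumber, Finset.sum_range_succ]; ring
  have hnum' : qNumber q 3 = 1 + q + q ^ 2 := by simp [qNumber, Finset.sum_range_succ]
  rw [qCoeff_succ hq0 hq1 1, qCoeff_one hq0 hq1, hnum, hnum']
  field_simp

lemma qCoeff_succ_le (hq0 : 0 < q) (hq1 : q < 1) (n : ℕ) :
    (2 * n + 1) * qCoeff q (n + 1) ≤ qCoeff q n := by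
  have h₁ := qNumber_pos hq0 (2 * n)
  have h₂ := qNumber_pos hq0 (2 * n + 1)
  have hratio : (2 * n + 1) * (q ^ (2 * n) * (1 + q) /
      (qNumber q (2 * n + 1) * qNumber q (2 * n + 2))) ≤ 1 := by
    rw [← mul_div_assoc, div_le_one (by positivity), ← mul_assoc]
    gcongr
    · exact_mod_cast mul_pow_le_qNumber hq0 hq1 (2 * n)
    · exact one_add_le_qNumber hq0 (2 * n)
  rw [qCoeff_succ hq0 hq1, mul_left_comm]
  exact mul_le_of_le_one_right (qCoeff_pos hq0 hq1 n).le hratio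

end QGamma

section Convexity

/-- The radii of the discs about `0` on which `f` is convex of order `α`; their supremum is
`radiusConvex α f`. -/
def convexityRadii (α : ℝ) (f : ℂ → ℂ) : Set ℝ :=
  {r : ℝ | 0 < r ∧ ∀ z : ℂ, ‖z‖ < r → α < (1 + z * deriv (deriv f) z / deriv f z).re}

variable {α : ℝ} {f : ℂ → ℂ}

lemma norm_mem_upperBounds_convexityRadii {w : ℂ}
    (hw : (1 + w * deriv (deriv f) w / deriv f w).re ≤ α) :
    ‖w‖ ∈ upperBounds (convexityRadii α f) := fun _ ⟨_, hr⟩ =>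
  le_of_not_gt fun hlt => (hr w hlt).not_ge hw

lemma radiusConvex_le_norm {w : ℂ} (hw : (1 + w * deriv (deriv f) w / deriv f w).re ≤ α) :
    radiusConvex α f ≤ ‖w‖ :=
  Real.sSup_le (fun _ hr => norm_mem_upperBounds_convexityRadii hw hr) (norm_nonneg w)

lemma lt_re_one_add_of_norm_lt {u v : ℂ} (h : ‖u‖ < (1 - α) * ‖v‖) : α < (1 + u / v).re := by
  have hv : 0 < ‖v‖ := (norm_nonneg v).lt_of_ne fun hv => by
    rw [← hv, mul_zero] at h
    exact h.not_ge (norm_nonneg u)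
  have hnorm : ‖u / v‖ < 1 - α := by rwa [norm_div, div_lt_iff₀ hv]
  have hre : -‖u / v‖ ≤ (u / v).re := (abs_le.1 (Complex.abs_re_le_norm _)).1
  rw [Complex.add_re, Complex.one_re]
  linarith

lemma lt_radiusConvex (hf : Differentiable ℂ f) (hbdd : BddAbove (convexityRadii α f)) {R : ℝ}
    (hR : 0 ≤ R) (h : ∀ z, ‖z‖ ≤ R → ‖z * deriv (deriv f) z‖ < (1 - α) * ‖deriv f z‖) :
    R < radiusConvex α f := by
  have hf' : Continuous (deriv f) := hf.contDiff.continuous_deriv le_top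
  have hf'' : Continuous (deriv (deriv f)) :=
    (hf.contDiff (n := 2)).iterate_deriv' 0 2 |>.continuous
  have hopen : IsOpen {z | ‖z * deriv (deriv f) z‖ < (1 - α) * ‖deriv f z‖} :=
    isOpen_lt (by fun_prop) (by fun_prop)
  obtain ⟨δ, hδ, hsub⟩ := (isCompact_closedBall (0 : ℂ) R).exists_thickening_subset_open hopen
    fun z hz => h z (mem_closedBall_zero_iff.1 hz)
  rw [thickening_closedBall hδ hR] at hsub
  have hmem : δ + R ∈ convexityRadii α f :=
    ⟨by positivity, fun z hz => lt_re_one_add_of_norm_lt (hsub (mem_ball_zero_iff.2 hz))⟩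
  exact (lt_add_of_pos_left R hδ).trans_le (le_csSup hbdd hmem)

end Convexity

section PowerSum

/-- The power series `∑ a n s ^ n` with real coefficients, as a function of a complex variable. -/
noncomputable def powerSum (a : ℕ → ℝ) (s : ℂ) : ℂ := ∑' n, (a n : ℂ) * s ^ n

variable {a : ℕ → ℝ}

lemma summable_powerSum (ha : ∀ r : ℝ, Summable fun n => a n * r ^ n) (s : ℂ) :
    Summable fun n => (a n : ℂ) * s ^ n := by
  refine Summable.of_norm ?_
  simpa using (ha ‖s‖).norm

lemma hasDerivAt_mul_powerSum (ha : ∀ r : ℝ, Summable fun n => a n * r ^ n) (κ : ℂ) (p : ℕ)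
    (z : ℂ) :
    HasDerivAt (fun w => w * powerSum a (κ * w ^ p))
      (powerSum (fun n => (p * n + 1) * a n) (κ * z ^ p)) z := by
  let F (n : ℕ) (w : ℂ) : ℂ := w * (a n * (κ * w ^ p) ^ n)
  let R := ‖z‖ + 1
  have hbound (n : ℕ) (w : ℂ) (hw : w ∈ Metric.ball 0 R) :
      ‖F n w‖ ≤ R * ‖a n * (‖κ‖ * R ^ p) ^ n‖ := by
    have hw : ‖w‖ ≤ R := (mem_ball_zero_iff.1 hw).le
    have hR : 0 ≤ R := by positivity
    simp only [F, norm_mul, norm_pow, Complex.norm_real, norm_norm, Real.norm_of_nonneg hR]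
    gcongr
  have hsum : Summable fun n => R * ‖a n * (‖κ‖ * R ^ p) ^ n‖ := (ha _).norm.mul_left R
  have hdiff (n : ℕ) : DifferentiableOn ℂ (F n) (Metric.ball 0 R) := by fun_prop
  have hz : z ∈ Metric.ball 0 R := by simp [R]
  have hF : (fun w => w * powerSum a (κ * w ^ p)) = fun w => ∑' n, F n w := by
    simp only [powerSum, F, tsum_mul_left]
  have hderiv (n : ℕ) : deriv (F n) z = ((p * n + 1) * a n : ℝ) * (κ * z ^ p) ^ n := by
    have hFn : F n = fun w => a n * κ ^ n * w ^ (p * n + 1) := by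
      funext w
      simp only [F]
      ring
    rw [hFn, deriv_const_mul_field, deriv_pow_field]
    push_cast
    ring
  have hat : DifferentiableAt ℂ (fun w => ∑' n, F n w) z :=
    (Complex.differentiableOn_tsum_of_summable_norm hsum hdiff Metric.isOpen_ball
      hbound).differentiableAt (Metric.isOpen_ball.mem_nhds hz)
  rw [hF, powerSum, ← tsum_congr hderiv, (Complex.hasSum_deriv_of_summable_norm hsum hdiff
    Metric.isOpen_ball hbound hz).tsum_eq]
  exact hat.hasDerivAt

lemma norm_powerSum_sub_sum_le {N : ℕ} {M θ : ℝ} (hθ0 : 0 ≤ θ) (hθ1 : θ < 1)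
    (ha : ∀ n, |a (n + N)| ≤ M * θ ^ n) {s : ℂ} (hs : ‖s‖ ≤ 1) :
    ‖powerSum a s - ∑ n ∈ Finset.range N, (a n : ℂ) * s ^ n‖ ≤ M / (1 - θ) := by
  have hgeom : HasSum (fun n => M * θ ^ n) (M / (1 - θ)) :=
    (hasSum_geometric_of_lt_one hθ0 hθ1).mul_left M
  have hterm (n : ℕ) : ‖(a (n + N) : ℂ) * s ^ (n + N)‖ ≤ M * θ ^ n := by
    rw [norm_mul, norm_pow, Complex.norm_real, Real.norm_eq_abs]
    exact (mul_le_of_le_one_right (abs_nonneg _) (pow_le_one₀ (norm_nonneg s) hs)).trans (ha n)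
  have hsum : Summable fun n => (a n : ℂ) * s ^ n :=
    (summable_nat_add_iff N).1 (Summable.of_norm_bounded hgeom.summable hterm)
  rw [powerSum, ← hsum.sum_add_tsum_nat_add N, add_sub_cancel_left]
  exact tsum_of_norm_bounded hgeom hterm

lemma powerSum_neg_ofReal (a : ℕ → ℝ) (y : ℝ) :
    powerSum a (-y) = (∑' n, (-1) ^ n * (a n * y ^ n) : ℝ) := by
  rw [powerSum, Complex.ofReal_tsum]
  refine tsum_congr fun n => ?_
  rw [neg_pow]
  push_cast
  ring

lemma sub_le_tsum_alternating {f : ℕ → ℝ} (hf : Antitone f)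
    (hsum : Summable fun n => (-1) ^ n * f n) : f 0 - f 1 ≤ ∑' n, (-1) ^ n * f n := by
  simpa [Finset.sum_range_succ, sub_eq_add_neg] using
    hf.alternating_series_le_tendsto hsum.hasSum.tendsto_sum_nat 1

end PowerSum

section EulerCoeff

/-- Coefficient sequences `d` to which the radius estimates apply: positive, normalized by
`d 0 = d 1 = 1`, and decaying at least as fast as `1 / (2n - 1)‼`. -/
structure IsNormalizedCoeff (d : ℕ → ℝ) : Prop where
  pos : ∀ n, 0 < d n
  zero : d 0 = 1
  one : d 1 = 1
  succ_le : ∀ n : ℕ, (2 * n + 1) * d (n + 1) ≤ d n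

lemma isNormalizedCoeff_qCoeff {q : ℝ} (hq0 : 0 < q) (hq1 : q < 1) :
    IsNormalizedCoeff (qCoeff q) :=
  ⟨qCoeff_pos hq0 hq1, qCoeff_zero hq0 hq1, qCoeff_one hq0 hq1, qCoeff_succ_le hq0 hq1⟩

/-- The coefficients of the `j`-th iterate of `f ↦ f + p s f'` applied to
`∑ d n (s / (p + 1) ^ 2) ^ n`. Since `d / dz (z f(κ z ^ p)) = (f + p s f')(κ z ^ p)`, the cases
`j = 1, 2` describe `F'` and `(z F')'` for `F z = z f(κ z ^ p)`; the scaling by `(p + 1) ^ 2` makes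
the linear coefficient of `(z F')'` equal to `1`. -/
noncomputable def eulerCoeff (d : ℕ → ℝ) (p j n : ℕ) : ℝ :=
  (p * n + 1) ^ j * d n / ((p + 1) ^ 2) ^ n

variable {d : ℕ → ℝ} {p : ℕ}

lemma eulerCoeff_succ (d : ℕ → ℝ) (p j n : ℕ) :
    eulerCoeff d p (j + 1) n = (p * n + 1) * eulerCoeff d p j n := by
  rw [eulerCoeff, eulerCoeff]
  ring

lemma eulerCoeff_zero_right (hd : IsNormalizedCoeff d) (p j : ℕ) : eulerCoeff d p j 0 = 1 := by
  simp [eulerCoeff, hd.zero]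

lemma eulerCoeff_one_one (hd : IsNormalizedCoeff d) (p : ℕ) :
    eulerCoeff d p 1 1 = 1 / (p + 1) := by
  have : (p : ℝ) + 1 ≠ 0 := by positivity
  rw [eulerCoeff, hd.one]
  push_cast
  field_simp

lemma eulerCoeff_two_one (hd : IsNormalizedCoeff d) (p : ℕ) : eulerCoeff d p 2 1 = 1 := by
  have : (p : ℝ) + 1 ≠ 0 := by positivity
  simp [eulerCoeff, hd.one, this]

lemma IsNormalizedCoeff.le_inv_factorial (hd : IsNormalizedCoeff d) (n : ℕ) :
    d n ≤ (n.factorial : ℝ)⁻¹ := by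
  induction n with
  | zero => simp [hd.zero]
  | succ n ih =>
    have hpos := hd.pos (n + 1)
    rw [Nat.factorial_succ, Nat.cast_mul, mul_inv, ← div_eq_inv_mul, le_div_iff₀ (by positivity)]
    calc d (n + 1) * (n + 1 : ℕ) ≤ (2 * n + 1) * d (n + 1) := by
          push_cast
          nlinarith [mul_nonneg n.cast_nonneg hpos.le]
      _ ≤ d n := hd.succ_le n
      _ ≤ _ := ih

lemma eulerCoeff_pos (hd : IsNormalizedCoeff d) (p j n : ℕ) : 0 < eulerCoeff d p j n := by
  have := hd.pos n
  rw [eulerCoeff]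
  positivity

lemma eulerCoeff_le (hd : IsNormalizedCoeff d) (p j n : ℕ) :
    eulerCoeff d p j n ≤ ((p + 1 : ℝ) ^ j) ^ n / n.factorial := by
  have hpos := (hd.pos n).le
  have hbernoulli : (p * n + 1 : ℝ) ≤ (p + 1) ^ n := by
    have := one_add_mul_le_pow (show (-2 : ℝ) ≤ p by linarith [p.cast_nonneg (α := ℝ)]) n
    linarith [add_comm (1 : ℝ) p ▸ this]
  have hscale : (1 : ℝ) ≤ ((p + 1) ^ 2) ^ n :=
    one_le_pow₀ (one_le_pow₀ (le_add_of_nonneg_left p.cast_nonneg))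
  calc eulerCoeff d p j n ≤ (p * n + 1) ^ j * d n := div_le_self (by positivity) hscale
    _ ≤ ((p + 1) ^ n) ^ j * (n.factorial : ℝ)⁻¹ := by
        gcongr
        exact hd.le_inv_factorial n
    _ = ((p + 1 : ℝ) ^ j) ^ n / n.factorial := by rw [pow_right_comm, div_eq_mul_inv]

lemma summable_eulerCoeff_mul_pow (hd : IsNormalizedCoeff d) (p j : ℕ) (r : ℝ) :
    Summable fun n => eulerCoeff d p j n * r ^ n := by
  refine Summable.of_norm_bounded (Real.summable_pow_div_factorial ((p + 1) ^ j * |r|)) fun n => ?_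
  rw [norm_mul, norm_pow, Real.norm_of_nonneg (eulerCoeff_pos hd p j n).le, Real.norm_eq_abs,
    mul_pow, mul_div_right_comm]
  gcongr
  exact eulerCoeff_le hd p j n

lemma eulerCoeff_one_succ_le (hd : IsNormalizedCoeff d) (p n : ℕ) :
    (2 * n + 1) * (p + 1) * eulerCoeff d p 1 (n + 1) ≤ eulerCoeff d p 1 n := by
  have hfactor : (p * (n + 1 : ℕ) + 1 : ℝ) ≤ (p * n + 1) * (p + 1) := by
    push_cast
    nlinarith [mul_nonneg (mul_nonneg p.cast_nonneg p.cast_nonneg) (n.cast_nonneg (α := ℝ))]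
  have hpos := hd.pos (n + 1)
  calc (2 * n + 1) * (p + 1) * eulerCoeff d p 1 (n + 1)
      = (p * (n + 1 : ℕ) + 1) / (p + 1) * ((2 * n + 1) * d (n + 1)) / ((p + 1) ^ 2) ^ n := by
        rw [eulerCoeff, pow_succ (_ ^ 2)]
        field_simp
    _ ≤ (p * n + 1) * d n / ((p + 1) ^ 2) ^ n := by
        gcongr
        · rwa [div_le_iff₀ (by positivity)]
        · exact hd.succ_le n
    _ = eulerCoeff d p 1 n := by rw [eulerCoeff, pow_one]

lemma eulerCoeff_two_succ_le (hd : IsNormalizedCoeff d) (hp : 1 ≤ p) (n : ℕ) :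
    5 * eulerCoeff d p 2 (n + 2) ≤ eulerCoeff d p 2 (n + 1) := by
  have hp : (1 : ℝ) ≤ p := by exact_mod_cast hp
  have hn : (0 : ℝ) ≤ n := n.cast_nonneg
  have hd₂ : 3 * d (n + 2) ≤ d (n + 1) := by
    have h := hd.succ_le (n + 1)
    push_cast at h
    nlinarith [hd.pos (n + 2)]
  have hfactor : (p * (n + 2) + 1 : ℝ) / (p + 1) ≤ 3 / 4 * (p * (n + 1) + 1) := by
    rw [div_le_iff₀ (by positivity)]
    nlinarith [mul_nonneg hn (sub_nonneg.2 hp), mul_nonneg (mul_nonneg hn (sub_nonneg.2 hp))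
      (zero_le_one.trans hp)]
  have hpos := hd.pos (n + 2)
  have hpos₁ := hd.pos (n + 1)
  calc 5 * eulerCoeff d p 2 (n + 2)
      = 5 * (((p * (n + 2) + 1) / (p + 1)) ^ 2 * d (n + 2)) / ((p + 1) ^ 2) ^ (n + 1) := by
        rw [eulerCoeff, pow_succ (_ ^ 2)]
        push_cast
        field_simp
    _ ≤ 5 * ((3 / 4 * (p * (n + 1) + 1)) ^ 2 * (d (n + 1) / 3)) / ((p + 1) ^ 2) ^ (n + 1) := by
        gcongr
        linarith
    _ ≤ (p * (n + 1) + 1) ^ 2 * d (n + 1) / ((p + 1) ^ 2) ^ (n + 1) := by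
        refine div_le_div_of_nonneg_right ?_ (by positivity)
        nlinarith [mul_pos (pow_pos (show (0 : ℝ) < p * (n + 1) + 1 by positivity) 2) hpos₁]
    _ = eulerCoeff d p 2 (n + 1) := by
        rw [eulerCoeff]
        push_cast
        rfl

lemma eulerCoeff_two_two_le (hd : IsNormalizedCoeff d) (hp : 1 ≤ p) :
    eulerCoeff d p 2 2 ≤ 1 / 5 := by
  have := eulerCoeff_two_succ_le hd hp 0
  rw [eulerCoeff_two_one hd] at this
  linarith

lemma eulerCoeff_two_add_three_le (hd : IsNormalizedCoeff d) (hp : 1 ≤ p) (n : ℕ) :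
    eulerCoeff d p 2 (n + 3) ≤ eulerCoeff d p 2 2 / 5 * (1 / 5) ^ n := by
  induction n with
  | zero => linarith [eulerCoeff_two_succ_le hd hp 1]
  | succ n ih =>
    have := eulerCoeff_two_succ_le hd hp (n + 2)
    rw [pow_succ]
    linarith

lemma eulerCoeff_two_two_eq (d : ℕ → ℝ) (p : ℕ) :
    eulerCoeff d p 2 2 = (2 * p + 1) * eulerCoeff d p 1 2 := by
  rw [eulerCoeff_succ]
  push_cast
  ring

lemma mul_eulerCoeff_one_two_le (hd : IsNormalizedCoeff d) (p : ℕ) :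
    2 * (p + 1 : ℝ) ^ 2 * eulerCoeff d p 1 2 ≤ 1 := by
  have h := eulerCoeff_one_succ_le hd p 1
  rw [eulerCoeff_one_one hd, le_div_iff₀ (by positivity)] at h
  push_cast at h
  nlinarith [mul_nonneg (sq_nonneg (p + 1 : ℝ)) (eulerCoeff_pos hd p 1 2).le]

lemma mul_eulerCoeff_one_two_lt (hd : IsNormalizedCoeff d) (hp : 1 ≤ p) :
    6 * (p + 1 : ℝ) * eulerCoeff d p 1 2 < 1 := by
  have h := eulerCoeff_two_two_le hd hp
  have hp : (1 : ℝ) ≤ p := by exact_mod_cast hp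
  rw [eulerCoeff_two_two_eq] at h
  nlinarith [mul_nonneg (sub_nonneg.2 hp) (eulerCoeff_pos hd p 1 2).le]

end EulerCoeff

section EulerEstimates

section Multiplier

variable {b b₁ c ε : ℝ} {s : ℂ}

lemma norm_ofReal_mul_pow_le {x : ℝ} (hx : 0 ≤ x) (hs : ‖s‖ ≤ 1) (k : ℕ) :
    ‖(x : ℂ) * s ^ k‖ ≤ x := by
  rw [norm_mul, norm_pow, Complex.norm_of_nonneg hx]
  exact mul_le_of_le_one_right hx (pow_le_one₀ (norm_nonneg s) hs)

lemma norm_one_sub_mul_mul_le (hc : 0 ≤ c) (hs : ‖s‖ ≤ 1) {u : ℂ} (hu : ‖u‖ ≤ ε) :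
    ‖(1 - c * s) * u‖ ≤ (1 + c) * ε := by
  have hfactor : ‖1 - c * s‖ ≤ 1 + c := by
    simpa using (norm_sub_le 1 (c * s)).trans
      (add_le_add_right (pow_one s ▸ norm_ofReal_mul_pow_le hc hs 1) _)
  rw [norm_mul]
  gcongr

-- The condition `c * b₁ = 2 * b` makes the quadratic terms of the product cancel.
lemma norm_one_sub_mul_quadratic_le (hb : 0 ≤ b) (hb₁ : 0 ≤ b₁) (hc : 0 ≤ c) (hcb : c * b₁ = 2 * b)
    {p : ℝ} (hp : 0 ≤ p) (hs : ‖s‖ ≤ 1) {δ : ℂ} (hδ : ‖δ‖ ≤ ε) :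
    ‖(1 - c * s) * (p * b₁ * s + 2 * p * b * s ^ 2 + δ)‖ ≤
      p * b₁ + 2 * p * b * c + (1 + c) * ε := by
  have hcb : (c * b₁ : ℂ) = 2 * b := by exact_mod_cast hcb
  have hexpand : (1 - c * s) * (p * b₁ * s + 2 * p * b * s ^ 2 + δ) =
      (p * b₁ : ℝ) * s ^ 1 - (2 * p * b * c : ℝ) * s ^ 3 + (1 - c * s) * δ := by
    push_cast
    linear_combination -p * s ^ 2 * hcb
  rw [hexpand]
  refine (norm_add_le _ _).trans (add_le_add ((norm_sub_le _ _).trans (add_le_add ?_ ?_)) ?_)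
  · exact norm_ofReal_mul_pow_le (by positivity) hs 1
  · exact norm_ofReal_mul_pow_le (by positivity) hs 3
  · exact norm_one_sub_mul_mul_le hc hs hδ

lemma le_norm_one_sub_mul_quadratic (hb : 0 ≤ b) (hc : 0 ≤ c) (hcb₁ : c ≤ b₁) (hcb : c * b₁ = 2 * b)
    (hs : ‖s‖ ≤ 1) {β : ℂ} (hβ : ‖β‖ ≤ ε) :
    1 - (b₁ - c + b + b * c + (1 + c) * ε) ≤
      ‖(1 - c * s) * (1 + b₁ * s + b * s ^ 2 + β)‖ := by
  have hcb : (c * b₁ : ℂ) = 2 * b := by exact_mod_cast hcb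
  have hexpand : (1 - c * s) * (1 + b₁ * s + b * s ^ 2 + β) =
      1 + ((b₁ - c : ℝ) * s ^ 1 - (b : ℝ) * s ^ 2 - (b * c : ℝ) * s ^ 3 + (1 - c * s) * β) := by
    push_cast
    linear_combination -s ^ 2 * hcb
  have hrest : ‖(b₁ - c : ℝ) * s ^ 1 - (b : ℝ) * s ^ 2 - (b * c : ℝ) * s ^ 3 + (1 - c * s) * β‖ ≤
      b₁ - c + b + b * c + (1 + c) * ε := by
    refine (norm_add_le _ _).trans (add_le_add ((norm_sub_le _ _).trans (add_le_add
      ((norm_sub_le _ _).trans (add_le_add ?_ ?_)) ?_)) ?_)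
    · exact norm_ofReal_mul_pow_le (sub_nonneg.2 hcb₁) hs 1
    · exact norm_ofReal_mul_pow_le hb hs 2
    · exact norm_ofReal_mul_pow_le (by positivity) hs 3
    · exact norm_one_sub_mul_mul_le hc hs hβ
  rw [hexpand]
  have := norm_sub_le_norm_add (1 : ℂ)
    ((b₁ - c : ℝ) * s ^ 1 - (b : ℝ) * s ^ 2 - (b * c : ℝ) * s ^ 3 + (1 - c * s) * β)
  rw [norm_one] at this
  linarith

lemma norm_quadratic_add_lt_norm_quadratic_add {p : ℝ} (hp : 0 ≤ p) (hb : 0 < b)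
    (hb₁ : 2 * (p + 1) ^ 2 * b ≤ 1) (hb₂ : 6 * (p + 1) * b < 1) {β δ : ℂ} (hs : ‖s‖ ≤ 1)
    (hβ : ‖β‖ ≤ (2 * p + 1) * b / 4) (hδ : ‖δ‖ ≤ (2 * p + 1) * b / 4) :
    ‖p * (1 / (p + 1) : ℝ) * s + 2 * p * b * s ^ 2 + δ‖ <
      ‖1 + (1 / (p + 1) : ℝ) * s + b * s ^ 2 + β‖ := by
  set c : ℝ := 2 * (p + 1) * b with hc_def
  set b₁ : ℝ := 1 / (p + 1) with hb₁_def
  have hmul : (p + 1) * b₁ = 1 := mul_one_div_cancel (by positivity)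
  have hc : 0 ≤ c := by positivity
  have hcb₁ : c ≤ b₁ := by
    rw [hc_def, hb₁_def, le_div_iff₀ (by positivity)]
    linarith
  have hcb : c * b₁ = 2 * b := by linear_combination 2 * b * hmul
  have hleft := norm_one_sub_mul_quadratic_le hb.le (hc.trans hcb₁) hc hcb hp hs hδ
  have hright := le_norm_one_sub_mul_quadratic hb.le hc hcb₁ hcb hs hβ
  have hgap : 0 < (2 * p + 1) * b * (1 - 3 * c) := mul_pos (by positivity) (by linarith)
  have hlt := (hleft.trans_lt (by linarith)).trans_le hright
  rw [norm_mul, norm_mul] at hlt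
  exact lt_of_mul_lt_mul_left hlt (norm_nonneg _)

end Multiplier

variable {d : ℕ → ℝ} {p : ℕ}

lemma powerSum_eulerCoeff_two_sub_one (hd : IsNormalizedCoeff d) (p : ℕ) (s : ℂ) :
    powerSum (eulerCoeff d p 2) s - powerSum (eulerCoeff d p 1) s =
      powerSum (fun n => p * n * eulerCoeff d p 1 n) s := by
  simp only [powerSum]
  rw [← (summable_powerSum (summable_eulerCoeff_mul_pow hd p 2) s).tsum_sub
    (summable_powerSum (summable_eulerCoeff_mul_pow hd p 1) s)]
  refine tsum_congr fun n => ?_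
  rw [eulerCoeff_succ]
  push_cast
  ring

lemma norm_powerSum_sub_sum_range_three_le (hd : IsNormalizedCoeff d) (hp : 1 ≤ p) {a : ℕ → ℝ}
    (ha0 : ∀ n, 0 ≤ a n) (ha : ∀ n, a n ≤ eulerCoeff d p 2 n) {s : ℂ} (hs : ‖s‖ ≤ 1) :
    ‖powerSum a s - ∑ n ∈ Finset.range 3, (a n : ℂ) * s ^ n‖ ≤ eulerCoeff d p 2 2 / 4 := by
  have htail (n : ℕ) : |a (n + 3)| ≤ eulerCoeff d p 2 2 / 5 * (1 / 5) ^ n := by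
    rw [abs_of_nonneg (ha0 _)]
    exact (ha _).trans (eulerCoeff_two_add_three_le hd hp n)
  exact (norm_powerSum_sub_sum_le (by norm_num) (by norm_num) htail hs).trans_eq (by ring)

lemma norm_powerSum_eulerCoeff_two_sub_one_lt (hd : IsNormalizedCoeff d) (hp : 1 ≤ p) {s : ℂ}
    (hs : ‖s‖ ≤ 1) :
    ‖powerSum (eulerCoeff d p 2) s - powerSum (eulerCoeff d p 1) s‖ <
      ‖powerSum (eulerCoeff d p 1) s‖ := by
  have hpos (n : ℕ) : 0 ≤ eulerCoeff d p 1 n := (eulerCoeff_pos hd p 1 n).le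
  have hpos' (n : ℕ) : 0 ≤ p * n * eulerCoeff d p 1 n := mul_nonneg (by positivity) (hpos n)
  have hsplit (n : ℕ) :
      eulerCoeff d p 2 n = p * n * eulerCoeff d p 1 n + eulerCoeff d p 1 n := by
    rw [eulerCoeff_succ]
    ring
  have hβ := norm_powerSum_sub_sum_range_three_le hd hp hpos
    (fun n => by linarith [hsplit n, hpos' n]) hs
  have hδ := norm_powerSum_sub_sum_range_three_le hd hp hpos'
    (fun n => by linarith [hsplit n, hpos n]) hs
  rw [eulerCoeff_two_two_eq] at hβ hδ
  have := norm_quadratic_add_lt_norm_quadratic_add p.cast_nonneg (eulerCoeff_pos hd p 1 2)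
    (mul_eulerCoeff_one_two_le hd p) (mul_eulerCoeff_one_two_lt hd hp) hs hβ hδ
  rw [powerSum_eulerCoeff_two_sub_one hd]
  convert this using 2
  · simp only [Finset.sum_range_succ, Finset.sum_range_zero, eulerCoeff_one_one hd]
    push_cast
    ring
  · simp only [Finset.sum_range_succ, Finset.sum_range_zero, eulerCoeff_one_one hd,
      eulerCoeff_zero_right hd]
    push_cast
    ring

lemma summable_alternating_eulerCoeff (hd : IsNormalizedCoeff d) (p j : ℕ) (y : ℝ) :
    Summable fun n => (-1) ^ n * (eulerCoeff d p j n * y ^ n) :=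
  (summable_eulerCoeff_mul_pow hd p j (-y)).congr fun n => by
    rw [neg_pow]
    ring

lemma tsum_alternating_eulerCoeff_one_pos (hd : IsNormalizedCoeff d) {y : ℝ} (hy0 : 0 ≤ y)
    (hy : y < p + 1) : 0 < ∑' n, (-1) ^ n * (eulerCoeff d p 1 n * y ^ n) := by
  have hanti : Antitone fun n => eulerCoeff d p 1 n * y ^ n := by
    refine antitone_nat_of_succ_le fun n => ?_
    have hpos := (eulerCoeff_pos hd p 1 (n + 1)).le
    have hle : eulerCoeff d p 1 (n + 1) * y ≤ eulerCoeff d p 1 n :=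
      calc eulerCoeff d p 1 (n + 1) * y ≤ eulerCoeff d p 1 (n + 1) * (p + 1) := by gcongr
        _ ≤ (2 * n + 1) * (p + 1) * eulerCoeff d p 1 (n + 1) := by
          nlinarith [mul_nonneg (mul_nonneg (n.cast_nonneg (α := ℝ))
            (by positivity : (0 : ℝ) ≤ p + 1)) hpos]
        _ ≤ eulerCoeff d p 1 n := eulerCoeff_one_succ_le hd p n
    calc eulerCoeff d p 1 (n + 1) * y ^ (n + 1) = eulerCoeff d p 1 (n + 1) * y * y ^ n := by ring
      _ ≤ eulerCoeff d p 1 n * y ^ n := by gcongr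
  refine lt_of_lt_of_le ?_
    (sub_le_tsum_alternating hanti (summable_alternating_eulerCoeff hd p 1 y))
  rw [eulerCoeff_zero_right hd, eulerCoeff_one_one hd, pow_zero, pow_one, one_mul,
    one_div_mul_eq_div, sub_pos, div_lt_one (by positivity)]
  exact hy

lemma tsum_alternating_eulerCoeff_two_le (hd : IsNormalizedCoeff d) (hp : 1 ≤ p) {y : ℝ}
    (hy0 : 0 ≤ y) (hy : y ≤ 5) :
    ∑' n, (-1) ^ n * (eulerCoeff d p 2 n * y ^ n) ≤ 1 - y + eulerCoeff d p 2 2 * y ^ 2 := by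
  have hsum := summable_alternating_eulerCoeff hd p 2 y
  have htail : Summable fun n => (-1) ^ n * (eulerCoeff d p 2 (n + 1) * y ^ (n + 1)) :=
    (((summable_nat_add_iff 1).2 hsum).neg).congr fun n => by rw [pow_succ (-1 : ℝ)]; ring
  have hanti : Antitone fun n => eulerCoeff d p 2 (n + 1) * y ^ (n + 1) := by
    refine antitone_nat_of_succ_le fun n => ?_
    have hpos := (eulerCoeff_pos hd p 2 (n + 2)).le
    have hle : eulerCoeff d p 2 (n + 2) * y ≤ eulerCoeff d p 2 (n + 1) := by
      nlinarith [eulerCoeff_two_succ_le hd hp n]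
    calc eulerCoeff d p 2 (n + 2) * y ^ (n + 2)
        = eulerCoeff d p 2 (n + 2) * y * y ^ (n + 1) := by ring
      _ ≤ eulerCoeff d p 2 (n + 1) * y ^ (n + 1) := by gcongr
  have hsplit : ∑' n, (-1) ^ n * (eulerCoeff d p 2 n * y ^ n) =
      1 - ∑' n, (-1) ^ n * (eulerCoeff d p 2 (n + 1) * y ^ (n + 1)) := by
    rw [hsum.tsum_eq_zero_add, eulerCoeff_zero_right hd, sub_eq_add_neg, ← tsum_neg]
    congr 1
    · simp
    · exact tsum_congr fun n => by rw [pow_succ (-1 : ℝ)]; ring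
  have hlead := sub_le_tsum_alternating hanti htail
  simp only [zero_add, eulerCoeff_two_one hd, pow_one, one_mul, one_add_one_eq_two] at hlead
  linarith

lemma re_powerSum_eulerCoeff_div_nonpos (hd : IsNormalizedCoeff d) (hp : 1 ≤ p) {y : ℝ}
    (hy : y = 1 + 2 * eulerCoeff d p 2 2) :
    powerSum (eulerCoeff d p 1) (-y) ≠ 0 ∧
      (powerSum (eulerCoeff d p 2) (-y) / powerSum (eulerCoeff d p 1) (-y)).re ≤ 0 := by
  have ht := eulerCoeff_pos hd p 2 2
  have ht' := eulerCoeff_two_two_le hd hp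
  have hden : 0 < ∑' n, (-1) ^ n * (eulerCoeff d p 1 n * y ^ n) := by
    have hp : (1 : ℝ) ≤ p := by exact_mod_cast hp
    exact tsum_alternating_eulerCoeff_one_pos hd (by linarith) (by linarith)
  have hnum : ∑' n, (-1) ^ n * (eulerCoeff d p 2 n * y ^ n) ≤ 0 := by
    refine (tsum_alternating_eulerCoeff_two_le hd hp (by linarith) (by linarith)).trans ?_
    subst hy
    nlinarith [mul_nonneg ht.le (sub_nonneg.2 ht')]
  rw [powerSum_neg_ofReal, powerSum_neg_ofReal, ← Complex.ofReal_div, Complex.ofReal_re]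
  exact ⟨Complex.ofReal_ne_zero.2 hden.ne', div_nonpos_of_nonpos_of_nonneg hnum hden.le⟩

end EulerEstimates

section NormalizedSeries

/-- The function `F z = z f(-κ z ^ p)`, where `f s = ∑ d n (s / (p + 1) ^ 2) ^ n`. For `p = 2` and
`p = 1` it is the common shape of `g_{0,σ}` and `h_{0,σ}`. -/
noncomputable def normalizedSeries (d : ℕ → ℝ) (p : ℕ) (κ : ℝ) (z : ℂ) : ℂ :=
  z * powerSum (eulerCoeff d p 0) (-κ * z ^ p)

variable {d : ℕ → ℝ} {p : ℕ} {κ : ℝ}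

lemma hasDerivAt_mul_powerSum_eulerCoeff (hd : IsNormalizedCoeff d) (p j : ℕ) (κ z : ℂ) :
    HasDerivAt (fun w => w * powerSum (eulerCoeff d p j) (κ * w ^ p))
      (powerSum (eulerCoeff d p (j + 1)) (κ * z ^ p)) z := by
  rw [funext (eulerCoeff_succ d p j)]
  exact hasDerivAt_mul_powerSum (summable_eulerCoeff_mul_pow hd p j) κ p z

lemma differentiable_normalizedSeries (hd : IsNormalizedCoeff d) (p : ℕ) (κ : ℝ) :
    Differentiable ℂ (normalizedSeries d p κ) := fun z =>
  (hasDerivAt_mul_powerSum_eulerCoeff hd p 0 (-κ) z).differentiableAt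

lemma deriv_normalizedSeries (hd : IsNormalizedCoeff d) (p : ℕ) (κ : ℝ) (z : ℂ) :
    deriv (normalizedSeries d p κ) z = powerSum (eulerCoeff d p 1) (-κ * z ^ p) :=
  (hasDerivAt_mul_powerSum_eulerCoeff hd p 0 (-κ) z).deriv

lemma mul_deriv_deriv_normalizedSeries (hd : IsNormalizedCoeff d) (p : ℕ) (κ : ℝ) (z : ℂ) :
    z * deriv (deriv (normalizedSeries d p κ)) z =
      powerSum (eulerCoeff d p 2) (-κ * z ^ p) - powerSum (eulerCoeff d p 1) (-κ * z ^ p) := by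
  have hdiff : DifferentiableAt ℂ (deriv (normalizedSeries d p κ)) z :=
    (differentiable_normalizedSeries hd p κ).contDiff (n := 2) |>.differentiable_deriv_two z
  have hprod := (hasDerivAt_id' z).mul hdiff.hasDerivAt
  rw [funext (deriv_normalizedSeries hd p κ)] at hprod ⊢
  linear_combination hprod.unique (hasDerivAt_mul_powerSum_eulerCoeff hd p 1 (-κ) z)

lemma norm_mul_deriv_deriv_normalizedSeries_lt (hd : IsNormalizedCoeff d) (hp : 1 ≤ p)
    (hκ : 0 < κ) {z : ℂ} (hz : ‖z‖ ^ p ≤ 1 / κ) :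
    ‖z * deriv (deriv (normalizedSeries d p κ)) z‖ < ‖deriv (normalizedSeries d p κ) z‖ := by
  have hs : ‖-κ * z ^ p‖ ≤ 1 := by
    rwa [norm_mul, norm_neg, norm_pow, Complex.norm_of_nonneg hκ.le, mul_comm,
      ← le_div_iff₀ hκ]
  rw [mul_deriv_deriv_normalizedSeries hd, deriv_normalizedSeries hd]
  exact norm_powerSum_eulerCoeff_two_sub_one_lt hd hp hs

lemma re_one_add_normalizedSeries_nonpos (hd : IsNormalizedCoeff d) (hp : 1 ≤ p) (hκ : 0 < κ)
    {R : ℝ} (hR : R ^ p = (1 + 2 * eulerCoeff d p 2 2) / κ) :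
    (1 + R * deriv (deriv (normalizedSeries d p κ)) R /
      deriv (normalizedSeries d p κ) R).re ≤ 0 := by
  have harg : -(κ : ℂ) * (R : ℂ) ^ p = -(κ * R ^ p : ℝ) := by
    push_cast
    ring
  obtain ⟨hne, hle⟩ := re_powerSum_eulerCoeff_div_nonpos hd hp
    (show κ * R ^ p = 1 + 2 * eulerCoeff d p 2 2 by rw [hR, mul_div_cancel₀ _ hκ.ne'])
  rwa [mul_deriv_deriv_normalizedSeries hd, deriv_normalizedSeries hd, harg, sub_div,
    div_self hne, add_sub_cancel]

theorem radiusConvex_normalizedSeries_pow_bounds (hd : IsNormalizedCoeff d) (hp : 1 ≤ p)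
    (hκ : 0 < κ) :
    1 / κ < radiusConvex 0 (normalizedSeries d p κ) ^ p ∧
      radiusConvex 0 (normalizedSeries d p κ) ^ p < 1 / (κ * (1 - 2 * eulerCoeff d p 2 2)) := by
  have hp₀ : p ≠ 0 := by omega
  have ht := eulerCoeff_pos hd p 2 2
  have ht' := eulerCoeff_two_two_le hd hp
  have hroot (x : ℝ) (hx : 0 ≤ x) : ∃ R : ℝ, 0 ≤ R ∧ R ^ p = x :=
    ⟨x ^ (p⁻¹ : ℝ), by positivity, Real.rpow_inv_natCast_pow hx hp₀⟩
  obtain ⟨r, hr0, hr⟩ := hroot (1 / κ) (by positivity)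
  obtain ⟨R, hR0, hR⟩ := hroot ((1 + 2 * eulerCoeff d p 2 2) / κ) (by positivity)
  have hfail := re_one_add_normalizedSeries_nonpos hd hp hκ hR
  have hlower : r < radiusConvex 0 (normalizedSeries d p κ) := by
    refine lt_radiusConvex (differentiable_normalizedSeries hd p κ)
      ⟨_, norm_mem_upperBounds_convexityRadii hfail⟩ hr0 fun z hz => ?_
    rw [sub_zero, one_mul]
    exact norm_mul_deriv_deriv_normalizedSeries_lt hd hp hκ (hr ▸ by gcongr)
  have hupper : radiusConvex 0 (normalizedSeries d p κ) ≤ R :=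
    (radiusConvex_le_norm hfail).trans_eq (Complex.norm_of_nonneg hR0)
  refine ⟨hr ▸ pow_lt_pow_left₀ hlower hr0 hp₀, ?_⟩
  calc radiusConvex 0 (normalizedSeries d p κ) ^ p ≤ R ^ p :=
        pow_le_pow_left₀ (hr0.trans hlower.le) hupper p
    _ = (1 + 2 * eulerCoeff d p 2 2) / κ := hR
    _ < 1 / (κ * (1 - 2 * eulerCoeff d p 2 2)) := by
        rw [div_lt_div_iff₀ hκ (by nlinarith)]
        nlinarith [mul_pos hκ (pow_pos ht 2)]

end NormalizedSeries

section QMittagLeffler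

variable {q : ℝ}

/-- The scale `(p + 1) ^ 2 σ ^ 2 / (1 + q)` at which `g_{0,σ}` (`p = 2`) and `h_{0,σ}` (`p = 1`)
become normalized series with coefficients `qCoeff q`. -/
noncomputable def qScale (σ q : ℝ) (p : ℕ) : ℝ := (p + 1) ^ 2 * σ ^ 2 / (1 + q)

lemma eulerCoeff_qCoeff_zero_mul_pow (hq0 : 0 < q) (σ : ℝ) (p n : ℕ) (z : ℂ) :
    (eulerCoeff (qCoeff q) p 0 n : ℂ) * (-(qScale σ q p) * z ^ p) ^ n =
      ((-1) ^ n * σ ^ (2 * n) * q ^ (n * (n - 1)) / qGamma q (2 * n + 1) : ℝ) * z ^ (p * n) := by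
  have : 1 + q ≠ 0 := by positivity
  have : (p : ℝ) + 1 ≠ 0 := by positivity
  have hreal : eulerCoeff (qCoeff q) p 0 n * (-(qScale σ q p)) ^ n =
      (-1) ^ n * σ ^ (2 * n) * q ^ (n * (n - 1)) / qGamma q (2 * n + 1) := by
    rw [eulerCoeff, qCoeff, qScale, neg_pow, div_pow, mul_pow, pow_mul σ]
    field_simp
  rw [← hreal, mul_pow, pow_mul]
  push_cast
  ring

lemma gML0_eq_normalizedSeries (hq0 : 0 < q) (σ : ℝ) :
    gML0 σ q = normalizedSeries (qCoeff q) 2 (qScale σ q 2) := by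
  funext z
  simp only [gML0, qML, normalizedSeries, powerSum, eulerCoeff_qCoeff_zero_mul_pow hq0, add_zero]

lemma hML0_eq_normalizedSeries (hq0 : 0 < q) (σ : ℝ) :
    hML0 σ q = normalizedSeries (qCoeff q) 1 (qScale σ q 1) := by
  funext z
  simp only [hML0, normalizedSeries, powerSum, eulerCoeff_qCoeff_zero_mul_pow hq0, one_mul]

lemma one_div_qScale_mul (hq0 : 0 < q) (hq1 : q < 1) (σ : ℝ) (p : ℕ) :
    1 / (qScale σ q p * (1 - 2 * eulerCoeff (qCoeff q) p 2 2)) =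
      (p + 1) ^ 2 * (1 + q) * (1 + q ^ 2) * (1 + q + q ^ 2) /
        (σ ^ 2 * ((p + 1) ^ 4 * ((1 + q ^ 2) * (1 + q + q ^ 2)) -
          2 * (2 * p + 1) ^ 2 * q ^ 2)) := by
  have hfactor : 1 - 2 * eulerCoeff (qCoeff q) p 2 2 =
      ((p + 1) ^ 4 * ((1 + q ^ 2) * (1 + q + q ^ 2)) - 2 * (2 * p + 1) ^ 2 * q ^ 2) /
        ((p + 1) ^ 4 * ((1 + q ^ 2) * (1 + q + q ^ 2))) := by
    rw [eulerCoeff, qCoeff_two hq0 hq1]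
    push_cast
    field_simp
  rw [hfactor, qScale]
  field_simp

end QMittagLeffler

theorem stmt19 (q σ : ℝ) (hq0 : 0 < q) (hq1 : q < 1) (hσ : 0 < σ) :
    ((1 + q) / (9 * σ ^ 2) < radiusConvex 0 (gML0 σ q) ^ 2 ∧
      radiusConvex 0 (gML0 σ q) ^ 2 <
        9 * (1 + q) * (1 + q ^ 2) * (1 + q + q ^ 2) /
          (σ ^ 2 * (81 * q ^ 4 + 81 * q ^ 3 + 112 * q ^ 2 + 81 * q + 81))) ∧
    ((1 + q) / (4 * σ ^ 2) < radiusConvex 0 (hML0 σ q) ∧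
      radiusConvex 0 (hML0 σ q) <
        2 * (1 + q) * (1 + q ^ 2) * (1 + q + q ^ 2) /
          (σ ^ 2 * (8 * q ^ 4 + 8 * q ^ 3 + 7 * q ^ 2 + 8 * q + 8))) := by
  have hd := isNormalizedCoeff_qCoeff hq0 hq1
  have hscale (p : ℕ) : 0 < qScale σ q p := by rw [qScale]; positivity
  obtain ⟨hg_lower, hg_upper⟩ :=
    radiusConvex_normalizedSeries_pow_bounds hd one_le_two (hscale 2)
  obtain ⟨hh_lower, hh_upper⟩ :=
    radiusConvex_normalizedSeries_pow_bounds hd le_rfl (hscale 1)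
  rw [one_div_qScale_mul hq0 hq1] at hg_upper hh_upper
  rw [pow_one] at hh_lower hh_upper
  rw [gML0_eq_normalizedSeries hq0, hML0_eq_normalizedSeries hq0]
  refine ⟨⟨hg_lower.trans_eq' ?_, hg_upper.trans_eq ?_⟩,
    hh_lower.trans_eq' ?_, hh_upper.trans_eq ?_⟩
  · rw [qScale]
    norm_num
  · congr 1 <;> push_cast <;> ring
  · rw [qScale]
    norm_num
  · rw [eq_comm, ← mul_div_mul_left _ (σ ^ 2 * _) two_ne_zero]
    congr 1 <;> push_cast <;> ring
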